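/- (Part of Lemma 3.13: C(S^∞) is a tensor idempotent.) There is an isomorphism of complex star-algebras between C(S^∞ × S^∞, ℂ) and C(S^∞, ℂ), where S^∞ is the unit sphere of the real Hilbert space ℓ²(ℕ); equivalently, via Gelfand duality, the commutative C*-algebra C(S^∞) satisfies C(S^∞) ⊗ C(S^∞) ≅ C(S^∞). -/

import Mathlib

/-!
Composition with a homeomorphism `S^∞ ≃ S^∞ × S^∞` gives the isomorphism of star-algebras, so it
is enough to prove that the unit sphere `S` of `ℓ²` is homeomorphic to `ℓ²`: then
`S × S ≃ ℓ² × ℓ² ≃ ℓ² ≃ S`. Stereographic projection identifies `S` minus a point `v` with the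
separable infinite-dimensional Hilbert space `vᗮ ≃ ℓ²`, so what remains is that a point can be
deleted from `S` without changing its topology (`nonempty_homeomorph_puncture`).

The deletion is a version of Bessaga's incomplete norm technique. With `v` the zeroth basis vector
and `l` the zeroth coordinate, let `T` be a continuous linear map out of `ℓ²`, into a Banach space,
with kernel spanned by `v` and with non-closed range. Radial projection (`sphereHomeoGauge`)
identifies `S` with the surface `Σ = {max |l x| ‖T x‖ = 1}`, on which `v` is the centre of the flat
top face `{l x = 1, ‖T x‖ ≤ 1}`. Choose a path `γ : (0, ∞) → ker l` vanishing on `[1, ∞)` such that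
`T ∘ γ` is `1/2`-Lipschitz and converges at `0` to a point outside the range of `T`. The map
`x ↦ x + γ (‖T x‖ + 1 - l x)` is defined on `Σ` away from `v`, where the argument of `γ` is
positive. It is the identity off the top face, because the argument of `γ` is at least `1` there,
and it is a homeomorphism onto `Σ`: the argument `t` is recovered from the image `y` as the unique
fixed point of the contraction `t ↦ ‖T y - (T ∘ γ) t‖ + 1 - l y`, and this fixed point is never `0`
because the limit of `T ∘ γ` at `0` is not in the range of `T`.
-/

open scoped BoundedContinuousFunction

/-- The real Hilbert space `ℓ²(ℕ)` of square-summable real sequences. -/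
noncomputable abbrev L2R : Type := lp (fun _ : ℕ => ℝ) 2

/-- The infinite-dimensional sphere `S^∞`, the unit sphere of `ℓ²(ℕ)`. -/
noncomputable abbrev InfSphere : Set L2R := Metric.sphere (0 : L2R) 1

open Set Filter Topology Metric

/-! ### Deleting a point -/

/-- For a `1/2`-Lipschitz path `g`, the equation `t = ‖b - g t‖ + c` has a unique solution, which
depends continuously on `(b, c)`. -/
lemma exists_continuous_fixedPoint {B : Type*} [NormedAddCommGroup B] (g : ℝ → B)
    (hg : LipschitzWith (1 / 2) g) :
    ∃ τ : B × ℝ → ℝ, Continuous τ ∧ ∀ p t, t = ‖p.1 - g t‖ + p.2 ↔ t = τ p := by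
  have hg' : ∀ s t, ‖g s - g t‖ ≤ 1 / 2 * |s - t| := fun s t => by
    have := hg.dist_le_mul s t
    rw [dist_eq_norm, Real.dist_eq] at this
    simpa using this
  have key : ∀ (p q : B × ℝ) (s t : ℝ),
      |(‖p.1 - g s‖ + p.2) - (‖q.1 - g t‖ + q.2)| ≤
        1 / 2 * |s - t| + (‖p.1 - q.1‖ + |p.2 - q.2|) := by
    intro p q s t
    have h1 : |‖p.1 - g s‖ - ‖q.1 - g t‖| ≤ ‖p.1 - q.1‖ + ‖g s - g t‖ := by
      refine (abs_norm_sub_norm_le _ _).trans ?_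
      rw [show p.1 - g s - (q.1 - g t) = (p.1 - q.1) - (g s - g t) by abel]
      exact norm_sub_le _ _
    have h2 := abs_add_le (‖p.1 - g s‖ - ‖q.1 - g t‖) (p.2 - q.2)
    have h3 := hg' s t
    rw [show (‖p.1 - g s‖ + p.2) - (‖q.1 - g t‖ + q.2)
      = (‖p.1 - g s‖ - ‖q.1 - g t‖) + (p.2 - q.2) by ring]
    linarith
  have hc : ∀ p : B × ℝ, ContractingWith (1 / 2) (fun t => ‖p.1 - g t‖ + p.2) := by
    intro p
    refine ⟨by rw [← NNReal.coe_lt_coe]; norm_num, LipschitzWith.of_dist_le_mul fun s t => ?_⟩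
    have := key p p s t
    rw [Real.dist_eq, Real.dist_eq]
    simpa using this
  refine ⟨fun p => (hc p).fixedPoint, ?_, fun p t => ⟨fun h => ?_, ?_⟩⟩
  · have hfix : ∀ p : B × ℝ, ‖p.1 - g (hc p).fixedPoint‖ + p.2 = (hc p).fixedPoint :=
      fun p => (hc p).fixedPoint_isFixedPt
    refine (LipschitzWith.of_dist_le_mul (K := 4) fun p q => ?_).continuous
    have := key p q (hc p).fixedPoint (hc q).fixedPoint
    rw [hfix p, hfix q] at this
    have h1 : ‖p.1 - q.1‖ ≤ dist p q := by
      rw [← dist_eq_norm]; exact le_max_left _ _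
    have h2 : |p.2 - q.2| ≤ dist p q := by
      rw [← Real.dist_eq]; exact le_max_right _ _
    rw [Real.dist_eq]
    norm_num
    linarith
  · exact (hc p).fixedPoint_unique h.symm
  · rintro rfl
    exact ((hc p).fixedPoint_isFixedPt).symm

/-- Bessaga's technique: the surface `max |l x| ‖T x‖ = 1` is homeomorphic to itself with the
centre `v` of its top face deleted, as soon as there is a path `γ` in `ker l`, trivial from time
`1` on, whose image `g` under `T` is `1/2`-Lipschitz and leaves the range of `T` at time `0`. -/
lemma nonempty_homeomorph_puncture {E B : Type*} [NormedAddCommGroup E] [NormedSpace ℝ E]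
    [NormedAddCommGroup B] [NormedSpace ℝ B] (l : E →L[ℝ] ℝ) (T : E →L[ℝ] B) (v : E)
    (γ : ℝ → E) (g : ℝ → B) (hlv : l v = 1) (hTv : T v = 0)
    (hinj : ∀ x, l x = 0 → T x = 0 → x = 0) (hg : LipschitzWith (1 / 2) g)
    (hTγ : ∀ t, 0 < t → T (γ t) = g t) (hlγ : ∀ t, 0 < t → l (γ t) = 0)
    (hγ : ∀ t, 1 ≤ t → γ t = 0) (hγc : ContinuousOn γ (Ioi 0)) (hg0 : ∀ x, T x ≠ g 0) :
    Nonempty ({y : {x : E // max |l x| ‖T x‖ = 1} // y.1 ≠ v} ≃ₜ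
      {x : E // max |l x| ‖T x‖ = 1}) := by
  obtain ⟨τ, hτc, hτ⟩ := exists_continuous_fixedPoint g hg
  have hg1 : ∀ t, 1 ≤ t → g t = 0 := fun t ht => by
    rw [← hTγ t (by linarith), hγ t ht, map_zero]
  -- On the surface, either `x` lies on the lateral face, or on the top or bottom face.
  have hcases : ∀ x : E, max |l x| ‖T x‖ = 1 ↔
      (|l x| ≤ 1 ∧ ‖T x‖ = 1) ∨ ((l x = 1 ∨ l x = -1) ∧ ‖T x‖ ≤ 1) := by
    intro x
    constructor
    · intro h
      have h1 : |l x| ≤ 1 := h ▸ le_max_left _ _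
      have h2 : ‖T x‖ ≤ 1 := h ▸ le_max_right _ _
      rcases max_choice |l x| ‖T x‖ with h' | h'
      · right
        exact ⟨eq_or_eq_neg_of_abs_eq (h'.symm.trans h), h2⟩
      · left
        exact ⟨h1, h'.symm.trans h⟩
    · rintro (⟨h1, h2⟩ | ⟨h1, h2⟩)
      · rw [h2, max_eq_right h1]
      · have : |l x| = 1 := by rcases h1 with h | h <;> simp [h]
        rw [this, max_eq_left h2]
  let a : E → ℝ := fun x => ‖T x‖ + (1 - l x)
  let b : E → ℝ := fun y => τ (T y, 1 - l y)
  have hb : ∀ y, b y = ‖T y - g (b y)‖ + (1 - l y) := fun y => (hτ (T y, 1 - l y) (b y)).2 rfl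
  have hb' : ∀ y t, t = ‖T y - g t‖ + (1 - l y) → t = b y :=
    fun y t h => (hτ (T y, 1 - l y) t).1 h
  have hl1 : ∀ x, max |l x| ‖T x‖ = 1 → l x ≤ 1 := fun x hx =>
    (le_abs_self _).trans ((le_max_left _ _).trans hx.le)
  have ha_pos : ∀ x, max |l x| ‖T x‖ = 1 → x ≠ v → 0 < a x := by
    intro x hx hxv
    have h1 := hl1 x hx
    have h2 := norm_nonneg (T x)
    by_contra h
    have h3 : ‖T x‖ + (1 - l x) ≤ 0 := not_lt.1 h
    have h4 : T x = 0 := norm_eq_zero.1 (by linarith)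
    have h5 : l x = 1 := by linarith
    refine hxv (sub_eq_zero.1 (hinj (x - v) ?_ ?_))
    · rw [map_sub, h5, hlv, sub_self]
    · rw [map_sub, h4, hTv, sub_self]
  have hb_pos : ∀ y, max |l y| ‖T y‖ = 1 → 0 < b y := by
    intro y hy
    have h1 := hl1 y hy
    have h2 := norm_nonneg (T y - g (b y))
    have h3 := hb y
    rcases (show 0 ≤ b y by linarith).lt_or_eq with h | h
    · exact h
    · have h4 : ‖T y - g (b y)‖ = 0 := by linarith
      rw [norm_eq_zero, sub_eq_zero, ← h] at h4
      exact absurd h4 (hg0 y)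
  -- The two maps are inverse to each other already before restricting to the surface.
  have hba : ∀ x, 0 < a x → b (x + γ (a x)) = a x := by
    intro x hx
    refine (hb' _ _ ?_).symm
    rw [map_add, map_add, hTγ _ hx, hlγ _ hx, add_sub_cancel_right, add_zero]
  have hab : ∀ y, 0 < b y → a (y - γ (b y)) = b y := by
    intro y hy
    change ‖T _‖ + (1 - l _) = _
    rw [map_sub, map_sub, hTγ _ hy, hlγ _ hy, sub_zero]
    exact (hb y).symm
  have hmemF : ∀ x, max |l x| ‖T x‖ = 1 → x ≠ v →
      max |l (x + γ (a x))| ‖T (x + γ (a x))‖ = 1 := by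
    intro x hx hxv
    have hpos := ha_pos x hx hxv
    have hlx := hl1 x hx
    by_cases h1 : 1 ≤ a x
    · rw [hγ _ h1, add_zero]; exact hx
    rcases (hcases x).1 hx with ⟨-, h⟩ | ⟨h | h, h'⟩
    · exact absurd (show 1 ≤ ‖T x‖ + (1 - l x) by linarith) h1
    · rw [hcases]
      have hl : l (x + γ (a x)) = 1 := by rw [map_add, hlγ _ hpos, h, add_zero]
      refine Or.inr ⟨Or.inl hl, ?_⟩
      -- Otherwise `‖T y‖ ≥ 1` would be a second fixed point, since `g` vanishes there.
      by_contra hgt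
      have h3 := hb' (x + γ (a x)) ‖T (x + γ (a x))‖
        (by rw [hg1 _ (not_le.1 hgt).le, hl, sub_zero, sub_self, add_zero])
      rw [hba x hpos] at h3
      linarith
    · have := norm_nonneg (T x)
      exact absurd (show 1 ≤ ‖T x‖ + (1 - l x) by linarith) h1
  have hmemG : ∀ y, max |l y| ‖T y‖ = 1 →
      max |l (y - γ (b y))| ‖T (y - γ (b y))‖ = 1 := by
    intro y hy
    have hpos := hb_pos y hy
    have hly := hl1 y hy
    by_cases h1 : 1 ≤ b y
    · rw [hγ _ h1, sub_zero]; exact hy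
    rcases (hcases y).1 hy with ⟨-, h⟩ | ⟨h | h, h'⟩
    · have h3 := hb' y (1 + (1 - l y))
        (by rw [hg1 _ (by linarith), sub_zero, h])
      linarith
    · rw [hcases]
      have hl : l (y - γ (b y)) = 1 := by rw [map_sub, hlγ _ hpos, h, sub_zero]
      refine Or.inr ⟨Or.inl hl, ?_⟩
      have h3 := hab y hpos
      change ‖T _‖ + (1 - l _) = _ at h3
      rw [hl] at h3
      linarith
    · have h3 := hb y
      have := norm_nonneg (T y - g (b y))
      exact absurd (show 1 ≤ b y by linarith) h1
  have hneG : ∀ y, max |l y| ‖T y‖ = 1 → y - γ (b y) ≠ v := by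
    intro y hy h
    have hpos := hb_pos y hy
    have h1 := hab y hpos
    rw [h] at h1
    change ‖T v‖ + (1 - l v) = _ at h1
    rw [hTv, hlv, norm_zero] at h1
    linarith
  have hac : Continuous a := by fun_prop
  have hbc : Continuous b := by fun_prop
  refine ⟨{ toFun := fun x => ⟨x.1.1 + γ (a x.1.1), hmemF _ x.1.2 x.2⟩
            invFun := fun y => ⟨⟨y.1 - γ (b y.1), hmemG _ y.2⟩, hneG _ y.2⟩
            left_inv := ?_
            right_inv := ?_
            continuous_toFun := ?_
            continuous_invFun := ?_ }⟩
  · rintro ⟨⟨x, hx⟩, hxv⟩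
    apply Subtype.ext
    apply Subtype.ext
    change x + γ (a x) - γ (b (x + γ (a x))) = x
    rw [hba x (ha_pos x hx hxv), add_sub_cancel_right]
  · rintro ⟨y, hy⟩
    apply Subtype.ext
    change y - γ (b y) + γ (a (y - γ (b y))) = y
    rw [hab y (hb_pos y hy), sub_add_cancel]
  · refine Continuous.subtype_mk (Continuous.add (by fun_prop) ?_) _
    exact hγc.comp_continuous (by fun_prop) fun x => ha_pos _ x.1.2 x.2
  · refine Continuous.subtype_mk (Continuous.subtype_mk (Continuous.sub (by fun_prop) ?_) _) _
    exact hγc.comp_continuous (by fun_prop) fun y => hb_pos _ y.2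

/-- Radial projection from the unit sphere onto the unit level set of a continuous, positively
homogeneous function that is positive away from the origin. -/
noncomputable def sphereHomeoGauge {E : Type*} [NormedAddCommGroup E] [NormedSpace ℝ E]
    (N : E → ℝ) (hN : Continuous N) (hpos : ∀ x, x ≠ 0 → 0 < N x)
    (hsmul : ∀ (r : ℝ) x, 0 < r → N (r • x) = r * N x) (h0 : N 0 = 0) :
    sphere (0 : E) 1 ≃ₜ {x : E // N x = 1} where
  toFun x := ⟨(N x.1)⁻¹ • x.1, by
    have := hpos x.1 (ne_zero_of_mem_unit_sphere x)
    rw [hsmul _ _ (inv_pos.2 this), inv_mul_cancel₀ this.ne']⟩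
  invFun x := ⟨‖x.1‖⁻¹ • x.1, by
    have : x.1 ≠ 0 := fun h => by
      have := x.2
      rw [h, h0] at this
      exact zero_ne_one this
    rw [mem_sphere_zero_iff_norm, norm_smul, norm_inv, norm_norm,
      inv_mul_cancel₀ (norm_ne_zero_iff.2 this)]⟩
  left_inv x := by
    have h1 := hpos x.1 (ne_zero_of_mem_unit_sphere x)
    have h2 : ‖x.1‖ = 1 := mem_sphere_zero_iff_norm.1 x.2
    apply Subtype.ext
    change ‖(N x.1)⁻¹ • x.1‖⁻¹ • (N x.1)⁻¹ • x.1 = x.1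
    rw [norm_smul, h2, norm_inv, Real.norm_of_nonneg h1.le, mul_one, inv_inv, smul_smul,
      mul_inv_cancel₀ h1.ne', one_smul]
  right_inv x := by
    have h2 := x.2
    have h1 : 0 < ‖x.1‖ := norm_pos_iff.2 fun h => by
      rw [h, h0] at h2
      exact zero_ne_one h2
    apply Subtype.ext
    change (N (‖x.1‖⁻¹ • x.1))⁻¹ • ‖x.1‖⁻¹ • x.1 = x.1
    rw [hsmul _ _ (inv_pos.2 h1), h2, mul_one, inv_inv, smul_smul, mul_inv_cancel₀ h1.ne',
      one_smul]
  continuous_toFun := by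
    refine Continuous.subtype_mk (Continuous.smul (Continuous.inv₀ (by fun_prop) fun x => ?_)
      (by fun_prop)) _
    exact (hpos x.1 (ne_zero_of_mem_unit_sphere x)).ne'
  continuous_invFun := by
    refine Continuous.subtype_mk (Continuous.smul (Continuous.inv₀ (by fun_prop) fun x => ?_)
      (by fun_prop)) _
    refine norm_ne_zero_iff.2 fun h => ?_
    have h2 := x.2
    rw [h, h0] at h2
    exact zero_ne_one h2

/-! ### The escaping path in `ℓ²` -/

/-- The `n`-th coordinate of the escaping path: it decreases linearly from `1` at time `0` to `0`
at time `1 / n`. The zeroth coordinate vanishes identically. -/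
noncomputable def pathCoord (n : ℕ) (t : ℝ) : ℝ :=
  if n = 0 then 0 else max 0 (min 1 (1 - n * t))

lemma pathCoord_zero (t : ℝ) : pathCoord 0 t = 0 := if_pos rfl

lemma pathCoord_at_zero {n : ℕ} (hn : n ≠ 0) : pathCoord n 0 = 1 := by
  simp [pathCoord, hn]

lemma pathCoord_eq_zero {n : ℕ} {t : ℝ} (h : 1 ≤ n * t) : pathCoord n t = 0 := by
  unfold pathCoord
  split_ifs
  · rfl
  · exact max_eq_left ((min_le_right _ _).trans (by linarith))

lemma abs_pathCoord_le (n : ℕ) (t : ℝ) : |pathCoord n t| ≤ 1 := by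
  unfold pathCoord
  split_ifs
  · simp
  · rw [abs_of_nonneg (le_max_left _ _)]
    exact max_le zero_le_one (min_le_left _ _)

lemma abs_pathCoord_sub_le (n : ℕ) (s t : ℝ) :
    |pathCoord n s - pathCoord n t| ≤ n * |s - t| := by
  unfold pathCoord
  split_ifs
  · simp; positivity
  · refine (abs_max_sub_max_le_max _ _ _ _).trans ?_
    rw [sub_self, abs_zero]
    refine max_le (by positivity) ((abs_min_sub_min_le_max _ _ _ _).trans ?_)
    rw [sub_self, abs_zero]
    refine max_le (by positivity) ?_
    rw [show 1 - (n : ℝ) * s - (1 - n * t) = -(n * (s - t)) by ring, abs_neg, abs_mul,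
      Nat.abs_cast]

lemma continuous_pathCoord (n : ℕ) : Continuous (pathCoord n) := by
  unfold pathCoord
  split_ifs <;> fun_prop

/-- The escaping path, in `ℓ²` at positive times. At time `t > 0` the coordinates of index at least
`1 / t` vanish, so the sum stops at `⌈1 / t⌉₊`; the value at `t ≤ 0` is a junk value. -/
noncomputable def path (t : ℝ) : L2R :=
  ∑ n ∈ Finset.range ⌈1 / t⌉₊, lp.single 2 n (pathCoord n t)

lemma sum_single_apply (N : ℕ) (t : ℝ) (m : ℕ) :
    (∑ n ∈ Finset.range N, lp.single 2 n (pathCoord n t) : L2R) m =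
      if m < N then pathCoord m t else 0 := by
  rw [lp.coeFn_sum, Finset.sum_apply]
  simp [lp.single_apply, Pi.single_apply]

lemma sum_single_apply_of_le {N : ℕ} {t : ℝ} (ht : 0 < t) (hN : 1 / t ≤ N) (m : ℕ) :
    (∑ n ∈ Finset.range N, lp.single 2 n (pathCoord n t) : L2R) m = pathCoord m t := by
  rw [sum_single_apply]
  split_ifs with h
  · rfl
  · refine (pathCoord_eq_zero ?_).symm
    rw [← div_le_iff₀ ht]
    exact hN.trans (by exact_mod_cast not_lt.1 h)

lemma path_apply {t : ℝ} (ht : 0 < t) (m : ℕ) : path t m = pathCoord m t :=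
  sum_single_apply_of_le ht (Nat.le_ceil _) m

lemma path_eq_zero {t : ℝ} (ht : 1 ≤ t) : path t = 0 := by
  apply lp.ext
  funext m
  rw [path_apply (by linarith)]
  rcases Nat.eq_zero_or_pos m with rfl | hm
  · simp [pathCoord_zero]
  · refine pathCoord_eq_zero ?_
    have : (1 : ℝ) ≤ m := by exact_mod_cast hm
    nlinarith

lemma continuousOn_path : ContinuousOn path (Ioi 0) := by
  intro t ht
  have ht : 0 < t := ht
  refine ContinuousAt.continuousWithinAt ?_
  -- On `(t / 2, ∞)` the path lives in a fixed finite-dimensional subspace.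
  have hev : path =ᶠ[𝓝 t]
      fun s => ∑ n ∈ Finset.range ⌈1 / (t / 2)⌉₊, lp.single 2 n (pathCoord n s) := by
    filter_upwards [lt_mem_nhds (show t / 2 < t by linarith)] with s hs
    have hs0 : 0 < s := by linarith
    apply lp.ext
    funext m
    rw [path_apply hs0, sum_single_apply_of_le hs0]
    exact (one_div_le_one_div_of_le (by linarith) hs.le).trans (Nat.le_ceil _)
  refine ContinuousAt.congr ?_ hev.symm
  refine Continuous.continuousAt (continuous_finsetSum _ fun n _ => ?_)
  exact (lp.isometry_single n).continuous.comp (continuous_pathCoord n)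

/-- The weight `1 / (2n)`. It makes the weighted escaping path `1/2`-Lipschitz in the supremum
norm; the convention `0⁻¹ = 0` gives the zeroth coordinate weight zero. -/
noncomputable def weight (n : ℕ) : ℝ := (2 * n)⁻¹

lemma weight_nonneg (n : ℕ) : 0 ≤ weight n := by unfold weight; positivity

lemma weight_le_one (n : ℕ) : weight n ≤ 1 := by
  unfold weight
  rcases Nat.eq_zero_or_pos n with rfl | hn
  · simp
  · refine inv_le_one_of_one_le₀ ?_
    have : (1 : ℝ) ≤ n := by exact_mod_cast hn
    linarith

lemma weight_ne_zero {n : ℕ} (hn : n ≠ 0) : weight n ≠ 0 := by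
  unfold weight; positivity

lemma abs_weight_mul_le (n : ℕ) (r : ℝ) : |weight n * r| ≤ |r| := by
  rw [abs_mul, abs_of_nonneg (weight_nonneg n)]
  exact mul_le_of_le_one_left (abs_nonneg _) (weight_le_one n)

/-- The weighted escaping path, in the space of bounded sequences, at all times. -/
noncomputable def weightedPath (t : ℝ) : ℕ →ᵇ ℝ :=
  BoundedContinuousFunction.ofNormedAddCommGroupDiscrete (fun n => weight n * pathCoord n t) 1
    fun n => (abs_weight_mul_le n _).trans (abs_pathCoord_le n t)

lemma lipschitzWith_weightedPath : LipschitzWith (1 / 2) weightedPath := by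
  refine LipschitzWith.of_dist_le_mul fun s t => ?_
  refine (BoundedContinuousFunction.dist_le (by positivity)).2 fun n => ?_
  change |weight n * pathCoord n s - weight n * pathCoord n t| ≤ _
  rw [← mul_sub, abs_mul, abs_of_nonneg (weight_nonneg n), Real.dist_eq]
  refine (mul_le_mul_of_nonneg_left (abs_pathCoord_sub_le n s t) (weight_nonneg n)).trans ?_
  rw [← mul_assoc]
  refine mul_le_mul_of_nonneg_right ?_ (abs_nonneg _)
  unfold weight
  rcases Nat.eq_zero_or_pos n with rfl | hn
  · simp
  · have : (n : ℝ) ≠ 0 := by positivity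
    simp; field_simp; norm_num

/-- The weighted inclusion of `ℓ²` into the space of bounded sequences. -/
noncomputable def weightedIncl : L2R →L[ℝ] (ℕ →ᵇ ℝ) :=
  LinearMap.mkContinuous
    { toFun := fun x =>
        BoundedContinuousFunction.ofNormedAddCommGroupDiscrete (fun n => weight n * x n) ‖x‖
          fun n => (abs_weight_mul_le n _).trans (lp.norm_apply_le_norm two_ne_zero x n)
      map_add' := fun x y => by ext n; simp [mul_add]
      map_smul' := fun r x => by ext n; simp [mul_left_comm] }
    1 fun x => by
      rw [one_mul]
      exact (BoundedContinuousFunction.norm_le (norm_nonneg _)).2 fun n =>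
        (abs_weight_mul_le n _).trans (lp.norm_apply_le_norm two_ne_zero x n)

lemma weightedIncl_apply (x : L2R) (n : ℕ) : weightedIncl x n = weight n * x n := rfl

lemma weightedIncl_ne_weightedPath_zero (x : L2R) : weightedIncl x ≠ weightedPath 0 := by
  intro h
  have h1 : ∀ n, n ≠ 0 → x n = 1 := fun n hn => by
    have h2 : weight n * x n = weight n * pathCoord n 0 := DFunLike.congr_fun h n
    rw [mul_right_inj' (weight_ne_zero hn), pathCoord_at_zero hn] at h2
    exact h2
  have h3 := (lp.summable_inner (𝕜 := ℝ) x x).tendsto_atTop_zero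
  have h4 : Tendsto (fun n => inner ℝ (x n) (x n)) atTop (𝓝 (1 : ℝ)) := by
    refine tendsto_const_nhds.congr' ?_
    filter_upwards [eventually_ne_atTop 0] with n hn
    simp [h1 n hn]
  exact zero_ne_one (tendsto_nhds_unique h3 h4)

/-! ### The sphere is homeomorphic to the Hilbert space -/

/-- The zeroth standard basis vector of `ℓ²`. -/
noncomputable def pole : L2R := lp.single 2 0 (1 : ℝ)

lemma norm_pole : ‖pole‖ = 1 := by
  unfold pole
  rw [lp.norm_single (by norm_num)]
  simp

lemma pole_apply (n : ℕ) : pole n = if n = 0 then 1 else 0 := by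
  simp [pole, lp.single_apply, Pi.single_apply]

/-- The function whose unit level set replaces the round sphere. -/
noncomputable def gaugeFn (x : L2R) : ℝ := max |lp.evalCLM ℝ _ 2 0 x| ‖weightedIncl x‖

lemma eq_zero_of_weightedIncl (x : L2R) (h0 : x 0 = 0) (h : weightedIncl x = 0) : x = 0 := by
  apply lp.ext
  funext n
  rcases eq_or_ne n 0 with rfl | hn
  · exact h0
  · have h2 : weight n * x n = 0 := DFunLike.congr_fun h n
    exact (mul_eq_zero.1 h2).resolve_left (weight_ne_zero hn)

lemma weightedIncl_pole : weightedIncl pole = 0 := by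
  ext n
  rw [weightedIncl_apply, pole_apply]
  by_cases h : n = 0
  · simp [h, weight]
  · simp [h]

lemma gaugeFn_pole : gaugeFn pole = 1 := by
  have : lp.evalCLM ℝ (fun _ : ℕ => ℝ) 2 0 pole = 1 := pole_apply 0
  rw [gaugeFn, weightedIncl_pole, this]
  simp

lemma gaugeFn_pos (x : L2R) (hx : x ≠ 0) : 0 < gaugeFn x := by
  by_contra h
  have h1 : |lp.evalCLM ℝ (fun _ : ℕ => ℝ) 2 0 x| ≤ 0 := (le_max_left _ _).trans (not_lt.1 h)
  have h2 : ‖weightedIncl x‖ ≤ 0 := (le_max_right _ _).trans (not_lt.1 h)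
  exact hx (eq_zero_of_weightedIncl x (abs_nonpos_iff.1 h1) (norm_le_zero_iff.1 h2))

lemma gaugeFn_smul (r : ℝ) (x : L2R) (hr : 0 < r) : gaugeFn (r • x) = r * gaugeFn x := by
  unfold gaugeFn
  rw [map_smul, map_smul, norm_smul, smul_eq_mul, abs_mul, Real.norm_eq_abs, abs_of_pos hr,
    mul_max_of_nonneg _ _ hr.le]

lemma continuous_gaugeFn : Continuous gaugeFn := by
  unfold gaugeFn; fun_prop

lemma nonempty_homeomorph_sphere_punctured :
    Nonempty ({x : InfSphere // x.1 ≠ pole} ≃ₜ InfSphere) := by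
  obtain ⟨Φ⟩ := nonempty_homeomorph_puncture (lp.evalCLM ℝ (fun _ : ℕ => ℝ) 2 0) weightedIncl pole
    path weightedPath (pole_apply 0) weightedIncl_pole eq_zero_of_weightedIncl
    lipschitzWith_weightedPath
    (fun t ht => by
      ext n
      rw [weightedIncl_apply, path_apply ht]
      rfl)
    (fun t ht => (path_apply ht 0).trans (pathCoord_zero t)) (fun t ht => path_eq_zero ht)
    continuousOn_path weightedIncl_ne_weightedPath_zero
  let R : InfSphere ≃ₜ {x : L2R // gaugeFn x = 1} :=
    sphereHomeoGauge gaugeFn continuous_gaugeFn gaugeFn_pos gaugeFn_smul (by simp [gaugeFn])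
  have hR : R ⟨pole, by simp [norm_pole]⟩ = ⟨pole, gaugeFn_pole⟩ := by
    apply Subtype.ext
    change (gaugeFn pole)⁻¹ • pole = pole
    rw [gaugeFn_pole, inv_one, one_smul]
  have hiff : ∀ x : InfSphere, x.1 ≠ pole ↔ (R x).1 ≠ pole := by
    intro x
    refine not_congr ⟨fun h => ?_, fun h => ?_⟩
    · have : x = ⟨pole, by simp [norm_pole]⟩ := Subtype.ext h
      rw [this, hR]
    · have : R x = R ⟨pole, by simp [norm_pole]⟩ := by rw [hR]; exact Subtype.ext h
      rw [R.injective this]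
  exact ⟨((R.subtype hiff).trans Φ).trans R.symm⟩

/-- A real Hilbert space with an orthonormal sequence whose orthogonal complement is trivial is
isometric to `ℓ²`. -/
lemma nonempty_linearIsometryEquiv {E : Type*} [NormedAddCommGroup E] [InnerProductSpace ℝ E]
    [CompleteSpace E] (b : ℕ → E) (hb : Orthonormal ℝ b)
    (h : ∀ x, (∀ n, inner ℝ (b n) x = 0) → x = 0) : Nonempty (E ≃ₗᵢ[ℝ] L2R) := by
  refine ⟨(HilbertBasis.mkOfOrthogonalEqBot hb ?_).repr⟩
  rw [eq_bot_iff]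
  intro x hx
  exact h x fun n => hx _ (Submodule.subset_span ⟨n, rfl⟩)

/-- The standard basis vectors of `ℓ²`. -/
noncomputable def stdVec (n : ℕ) : L2R := lp.single 2 n (1 : ℝ)

lemma inner_stdVec (n : ℕ) (x : L2R) : inner ℝ (stdVec n) x = x n := by
  unfold stdVec
  rw [lp.inner_single_left]
  simp

lemma inner_stdVec_stdVec (m n : ℕ) :
    inner ℝ (stdVec m) (stdVec n) = if m = n then (1 : ℝ) else 0 := by
  rw [inner_stdVec]
  simp [stdVec, lp.single_apply, Pi.single_apply]

lemma nonempty_orthogonal_pole : Nonempty ((ℝ ∙ pole)ᗮ ≃ₗᵢ[ℝ] L2R) := by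
  have hmem : ∀ n, stdVec (n + 1) ∈ (ℝ ∙ pole)ᗮ := fun n => by
    rw [Submodule.mem_orthogonal_singleton_iff_inner_right]
    exact (inner_stdVec_stdVec 0 (n + 1)).trans (if_neg (by omega))
  refine nonempty_linearIsometryEquiv (fun n => (⟨stdVec (n + 1), hmem n⟩ : (ℝ ∙ pole)ᗮ)) ?_ ?_
  · rw [orthonormal_iff_ite]
    intro m n
    rw [Submodule.coe_inner, inner_stdVec_stdVec]
    simp
  · intro x hx
    apply Subtype.ext
    apply lp.ext
    funext n
    rcases n with _ | n
    · rw [← inner_stdVec]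
      exact Submodule.mem_orthogonal_singleton_iff_inner_right.1 x.2
    · rw [← inner_stdVec]
      exact hx n

lemma nonempty_homeomorph_prod : Nonempty (L2R × L2R ≃ₜ L2R) := by
  let e : ℕ ⊕ ℕ → WithLp 2 (L2R × L2R) :=
    Sum.elim (fun n => WithLp.toLp 2 (stdVec n, 0)) (fun n => WithLp.toLp 2 (0, stdVec n))
  have he : Orthonormal ℝ e := by
    rw [orthonormal_iff_ite]
    rintro (m | m) (n | n) <;> simp [e, WithLp.prod_inner_apply, inner_stdVec_stdVec]
  obtain ⟨Ψ⟩ := nonempty_linearIsometryEquiv (e ∘ Equiv.natSumNatEquivNat.symm)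
    (he.comp _ Equiv.natSumNatEquivNat.symm.injective) (by
      intro x hx
      have hx' : ∀ i, inner ℝ (e i) x = 0 := fun i => by
        have := hx (Equiv.natSumNatEquivNat i)
        rwa [Function.comp_apply, Equiv.symm_apply_apply] at this
      have h1 : x.fst = 0 := by
        apply lp.ext
        funext n
        simpa [e, WithLp.prod_inner_apply, inner_stdVec] using hx' (Sum.inl n)
      have h2 : x.snd = 0 := by
        apply lp.ext
        funext n
        simpa [e, WithLp.prod_inner_apply, inner_stdVec] using hx' (Sum.inr n)
      exact WithLp.ofLp_injective 2 (Prod.ext h1 h2))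
  exact ⟨(WithLp.homeomorphProd 2 L2R L2R).symm.trans Ψ.toHomeomorph⟩

lemma nonempty_homeomorph_infSphere : Nonempty (InfSphere ≃ₜ L2R) := by
  obtain ⟨D⟩ := nonempty_homeomorph_sphere_punctured
  obtain ⟨V⟩ := nonempty_orthogonal_pole
  let s := stereographic norm_pole
  have hs : ∀ x : InfSphere, x.1 ≠ pole ↔ x ∈ s.source := fun x => by
    rw [stereographic_source, mem_compl_singleton_iff]
    exact not_congr (Subtype.ext_iff (a1 := x) (a2 := ⟨pole, by simp [norm_pole]⟩)).symm
  let A : {x : InfSphere // x.1 ≠ pole} ≃ₜ s.source := (Homeomorph.refl _).subtype hs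
  let C : s.target ≃ₜ (ℝ ∙ pole)ᗮ :=
    (Homeomorph.setCongr (stereographic_target norm_pole)).trans (Homeomorph.Set.univ _)
  exact ⟨D.symm.trans (A.trans (s.toHomeomorphSourceTarget.trans (C.trans V.toHomeomorph)))⟩

/-- Composition with a homeomorphism is an isomorphism of star-algebras of bounded continuous
functions. -/
noncomputable def starAlgEquivOfHomeomorph {X Y : Type*} [TopologicalSpace X] [TopologicalSpace Y]
    (h : Y ≃ₜ X) : (X →ᵇ ℂ) ≃⋆ₐ[ℂ] (Y →ᵇ ℂ) where
  toFun f := f.compContinuous ⟨h, h.continuous⟩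
  invFun f := f.compContinuous ⟨h.symm, h.symm.continuous⟩
  left_inv f := by ext x; simp
  right_inv f := by ext x; simp
  map_mul' f g := by ext x; simp
  map_add' f g := by ext x; simp
  map_star' f := by ext x; simp
  map_smul' r f := by ext x; simp

/-- **`C(S^∞)` is a tensor idempotent.** The star-algebra of bounded continuous
complex-valued functions on `S^∞ × S^∞` is isomorphic, as a complex star-algebra,
to that on `S^∞` (equivalently, via Gelfand duality, `C(S^∞) ⊗ C(S^∞) ≅ C(S^∞)`). -/
theorem boundedContinuousFunctions_infSphere_idempotent :
    Nonempty (((InfSphere × InfSphere) →ᵇ ℂ) ≃⋆ₐ[ℂ] (InfSphere →ᵇ ℂ)) := by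
  obtain ⟨H⟩ := nonempty_homeomorph_infSphere
  obtain ⟨P⟩ := nonempty_homeomorph_prod
  exact ⟨starAlgEquivOfHomeomorph ((H.trans P.symm).trans (H.symm.prodCongr H.symm))⟩
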